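/- Let 𝔫 be a nonabelian k-step nilpotent finite-dimensional real Lie algebra such that either 𝔫 or ℝ⊕𝔫 admits a symplectic structure. Let m₁,…,m_k be subspaces of 𝔫* with m₁⊕…⊕m_j = {f ∈ 𝔫* : f vanishes on Cʲ(𝔫)} for each j = 1,…,k, and for 1 ≤ t ≤ ⌈k/2⌉ let P_t : Λ²𝔫* → m_t∧m_{k−t+1} be the projection with respect to the decomposition Λ²𝔫* = ⊕_{1≤i≤j≤k} m_i∧m_j. Then for every t with 1 ≤ t ≤ ⌈k/2⌉ such that dim C^{k−t}(𝔫) + dim C^{t−1}(𝔫) > dim 𝔫 (in particular for t = 1), there exists a closed 2-form σ on 𝔫 which is not exact and satisfies P_t(σ) ≠ 0. -/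

import Mathlib

/-- A 2-form on a real Lie algebra is closed if it satisfies the cocycle condition. -/
def IsClosed2Form {L : Type*} [LieRing L] [LieAlgebra ℝ L]
    (ω : L →ₗ[ℝ] L →ₗ[ℝ] ℝ) : Prop :=
  ∀ x y z : L, ω ⁅x, y⁆ z + ω ⁅y, z⁆ x + ω ⁅z, x⁆ y = 0

/-- A 2-form is exact if `ω(X,Y) = -f [X,Y]` for some linear functional `f`. -/
def IsExact2Form {L : Type*} [LieRing L] [LieAlgebra ℝ L]
    (ω : L →ₗ[ℝ] L →ₗ[ℝ] ℝ) : Prop :=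
  ∃ f : L →ₗ[ℝ] ℝ, ∀ x y : L, ω x y = -f ⁅x, y⁆

/-- A symplectic structure: a nondegenerate alternating closed bilinear form. -/
def IsSymplectic {L : Type*} [LieRing L] [LieAlgebra ℝ L]
    (ω : L →ₗ[ℝ] L →ₗ[ℝ] ℝ) : Prop :=
  (∀ x : L, ω x x = 0) ∧ (∀ x : L, (∀ y : L, ω x y = 0) → x = 0) ∧ IsClosed2Form ω

/-- `U ∧ V`: the span, inside the bilinear forms on `L`, of the alternating forms
`(X,Y) ↦ a(X)b(Y) − a(Y)b(X)` with `a ∈ U`, `b ∈ V`. -/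
noncomputable def wedgeSpan {L : Type*} [AddCommGroup L] [Module ℝ L]
    (U V : Submodule ℝ (Module.Dual ℝ L)) : Submodule ℝ (L →ₗ[ℝ] L →ₗ[ℝ] ℝ) :=
  Submodule.span ℝ {w | ∃ a ∈ U, ∃ b ∈ V, w = a.smulRight b - b.smulRight a}

/-- The direct product of the one-dimensional abelian Lie algebra `ℝ` with `L`. -/
noncomputable instance RL.lieRing {L : Type*} [LieRing L] [LieAlgebra ℝ L] :
    LieRing (ℝ × L) where
  bracket a b := (0, ⁅a.2, b.2⁆)
  add_lie x y z := by simp [Prod.ext_iff]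
  lie_add x y z := by simp [Prod.ext_iff]
  lie_self x := by simp [Prod.ext_iff]
  leibniz_lie x y z := by simp [Prod.ext_iff]

noncomputable instance RL.lieAlgebra {L : Type*} [LieRing L] [LieAlgebra ℝ L] :
    LieAlgebra ℝ (ℝ × L) where
  lie_smul t x y := by simp [Bracket.bracket, Prod.ext_iff]

/-!
Pull the symplectic form back to a closed form `σ` on `𝔫`; its radical meets `[𝔫, 𝔫]` trivially.
An exact form kills the centre, hence `C^{k-1}(𝔫)`, so `σ` is not exact. Closedness gives
`σ(C^a, C^b) = 0` for `a + b ≥ k`, which in a basis of `𝔫*` adapted to `m₁ ⊕ … ⊕ m_k` says that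
only the terms of `σ` in `m_i ∧ m_j` with `i + j ≤ k + 1` survive. On `C^{k-t} × C^{t-1}` all of
these vanish except the one in `m_t ∧ m_{k-t+1}`, so there `P_t σ` agrees with `σ`. Were
`P_t σ = 0`, then `σ` would embed `C^{k-t}` into the annihilator of `C^{t-1}`, contradicting
`dim C^{k-t} + dim C^{t-1} > dim 𝔫`.
-/

open Module LieModule

section LinearAlgebra

theorem exists_apply_ne_zero_of_finrank_lt {K V W : Type*} [Field K] [AddCommGroup V] [Module K V]
    [AddCommGroup W] [Module K W] [FiniteDimensional K W] {σ : V →ₗ[K] W →ₗ[K] K}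
    {A : Submodule K V} {B : Submodule K W} (hA : Disjoint A (LinearMap.ker σ))
    (hAB : finrank K W < finrank K A + finrank K B) : ∃ x ∈ A, ∃ y ∈ B, σ x y ≠ 0 := by
  by_contra! h
  let τ : A →ₗ[K] B.dualAnnihilator := (σ.domRestrict A).codRestrict B.dualAnnihilator
    fun x ↦ (Submodule.mem_dualAnnihilator _).2 (h x x.2)
  have hτ : Function.Injective τ :=
    (LinearMap.injective_codRestrict_iff _).2 (LinearMap.injective_domRestrict_iff.2 hA)
  have hle : finrank K A ≤ finrank K B.dualAnnihilator :=
    LinearMap.finrank_le_finrank_of_injective hτ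
  have hB := Subspace.finrank_add_finrank_dualAnnihilator_eq B
  omega

theorem exists_dualBasis_eq {R M ι : Type*} [CommRing R] [AddCommGroup M] [Module R M]
    [IsReflexive R M] [Finite ι] [DecidableEq ι] (b : Basis ι R (Dual R M)) :
    ∃ e : Basis ι R M, e.dualBasis = b := by
  let e := b.dualBasis.map (evalEquiv R M).symm
  have he (f : Dual R M) (j : ι) : f (e j) = b.dualBasis j f := by simp [e]
  refine ⟨e, Basis.eq_of_apply_eq fun i ↦ e.ext fun j ↦ ?_⟩
  rw [he (b i) j, Basis.dualBasis_apply_self, Basis.dualBasis_apply_self]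
  exact if_congr eq_comm rfl rfl

theorem two_smul_eq_sum_coord_of_isAlt {R M ι : Type*} [CommRing R] [AddCommGroup M] [Module R M]
    [Fintype ι] {σ : M →ₗ[R] M →ₗ[R] R} (hσ : σ.IsAlt) (e : Basis ι R M) :
    (2 : R) • σ = ∑ r, ∑ s, σ (e r) (e s) •
      ((e.coord r).smulRight (e.coord s) - (e.coord s).smulRight (e.coord r)) := by
  classical
  refine LinearMap.ext_basis e e fun r s ↦ ?_
  have hneg : σ (e s) (e r) = -σ (e r) (e s) := (hσ.neg _ _).symm
  simp only [LinearMap.smul_apply, LinearMap.sum_apply, LinearMap.sub_apply,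
    LinearMap.smulRight_apply, Basis.coord_apply, Basis.repr_self, Finsupp.single_apply,
    smul_eq_mul, mul_sub, mul_ite, mul_one, mul_zero, Finset.sum_sub_distrib, Finset.sum_ite_irrel,
    Finset.sum_const_zero, Finset.sum_ite_eq, Finset.mem_univ, if_true, hneg]
  ring

end LinearAlgebra

section DualDecomposition

variable {K V : Type*} [Field K] [AddCommGroup V] [Module K V]

/-- The family `m 1, …, m k` of subspaces of `V*` is a dual decomposition of the filtration `C` of
`V`: it is independent and `m 1 ⊕ … ⊕ m j` is the annihilator of `C j` for `1 ≤ j ≤ k`. The values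
of `m` outside `[1, k]` are irrelevant. -/
structure IsDualDecomposition (C : ℕ → Submodule K V) (k : ℕ) (m : ℕ → Submodule K (Dual K V)) :
    Prop where
  iSupIndep : iSupIndep fun i : Finset.Icc 1 k ↦ m i
  iSup_eq : ∀ j ∈ Finset.Icc 1 k, ⨆ i ∈ Finset.Icc 1 j, m i = (C j).dualAnnihilator

namespace IsDualDecomposition

variable {C : ℕ → Submodule K V} {k : ℕ} {m : ℕ → Submodule K (Dual K V)}

theorem apply_eq_zero (h : IsDualDecomposition C k m) {i : ℕ} (hi : i ∈ Finset.Icc 1 k)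
    {f : Dual K V} (hf : f ∈ m i) {x : V} (hx : x ∈ C i) : f x = 0 := by
  have hfC : f ∈ (C i).dualAnnihilator :=
    h.iSup_eq i hi ▸ le_biSup m (Finset.mem_Icc.2 ⟨(Finset.mem_Icc.1 hi).1, le_rfl⟩) hf
  exact (Submodule.mem_dualAnnihilator f).1 hfC x hx

theorem mem_of_forall_apply_eq_zero (h : IsDualDecomposition C k m) {j : ℕ}
    (hj : j ∈ Finset.Icc 1 k) {x : V} (hx : ∀ i ∈ Finset.Icc 1 j, ∀ f ∈ m i, f x = 0) :
    x ∈ C j := by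
  rw [← Subspace.dualAnnihilator_dualCoannihilator_eq (W := C j), ← h.iSup_eq j hj,
    Submodule.mem_dualCoannihilator]
  have hle : ⨆ i ∈ Finset.Icc 1 j, m i ≤ LinearMap.ker (Dual.eval K V x) := iSup₂_le hx
  exact fun f hf ↦ hle hf

theorem isInternal (h : IsDualDecomposition C k m) (hk : 1 ≤ k) (hCk : C k = ⊥) :
    DirectSum.IsInternal fun i : Finset.Icc 1 k ↦ m i := by
  refine DirectSum.isInternal_submodule_of_iSupIndep_of_iSup_eq_top h.iSupIndep ?_
  rw [iSup_subtype, h.iSup_eq k (Finset.mem_Icc.2 ⟨hk, le_rfl⟩), hCk,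
    Submodule.dualAnnihilator_bot]

theorem exists_adapted_basis [FiniteDimensional K V] (h : IsDualDecomposition C k m) (hk : 1 ≤ k)
    (hC0 : C 0 = ⊤) (hCk : C k = ⊥) :
    ∃ (ι : Type) (_ : Fintype ι) (d : ι → ℕ) (e : Basis ι K V), ∀ s,
      d s ∈ Finset.Icc 1 k ∧ e.coord s ∈ m (d s) ∧ e s ∈ C (d s - 1) := by
  classical
  have (i : ℕ) : Free K (m i) := Free.of_divisionRing K (m i)
  let b := (h.isInternal hk hCk).collectedBasis fun i ↦ finBasis K (m i)
  obtain ⟨e, he⟩ := exists_dualBasis_eq b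
  refine ⟨_, inferInstance, fun s ↦ s.1.1, e, fun s ↦ ⟨s.1.2, ?_, ?_⟩⟩
  · rw [← Basis.coe_dualBasis, he]
    exact (h.isInternal hk hCk).collectedBasis_mem _ s
  · dsimp only
    have hs := Finset.mem_Icc.1 s.1.2
    obtain hs1 | hs1 := Nat.eq_zero_or_pos ((s.1 : ℕ) - 1)
    · simp [hs1, hC0]
    refine h.mem_of_forall_apply_eq_zero (Finset.mem_Icc.2 (by omega)) fun i hi f hf ↦ ?_
    rw [Finset.mem_Icc] at hi
    let i' : Finset.Icc 1 k := ⟨i, Finset.mem_Icc.2 (by omega)⟩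
    have hne : i' ≠ s.1 := Subtype.coe_ne_coe.1 (show i ≠ s.1 by omega)
    rw [← Basis.dualBasis_repr, he]
    exact (h.isInternal hk hCk).collectedBasis_repr_of_mem_ne _ hne hf

end IsDualDecomposition

end DualDecomposition

section WedgeSpan

variable {V : Type*} [AddCommGroup V] [Module ℝ V]

theorem wedgeSpan_le_swap (U W : Submodule ℝ (Dual ℝ V)) : wedgeSpan U W ≤ wedgeSpan W U := by
  refine Submodule.span_le.2 ?_
  rintro _ ⟨a, ha, b, hb, rfl⟩
  have hmem : b.smulRight a - a.smulRight b ∈ wedgeSpan W U :=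
    Submodule.subset_span ⟨b, hb, a, ha, rfl⟩
  have hneg : a.smulRight b - b.smulRight a = (-1 : ℝ) • (b.smulRight a - a.smulRight b) := by
    ext
    simp
  exact hneg ▸ Submodule.smul_mem _ _ hmem

theorem wedgeSpan_comm (U W : Submodule ℝ (Dual ℝ V)) : wedgeSpan U W = wedgeSpan W U :=
  le_antisymm (wedgeSpan_le_swap U W) (wedgeSpan_le_swap W U)

theorem apply_eq_zero_of_mem_wedgeSpan {U W : Submodule ℝ (Dual ℝ V)} {x y : V}
    (hxy : (∀ a ∈ U, a x = 0) ∨ ∀ b ∈ W, b y = 0) (hyx : (∀ a ∈ U, a y = 0) ∨ ∀ b ∈ W, b x = 0)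
    {ω : V →ₗ[ℝ] V →ₗ[ℝ] ℝ} (hω : ω ∈ wedgeSpan U W) : ω x y = 0 := by
  have hle : wedgeSpan U W ≤ LinearMap.ker (LinearMap.applyₗ y ∘ₗ LinearMap.applyₗ x) := by
    refine Submodule.span_le.2 ?_
    rintro _ ⟨a, ha, b, hb, rfl⟩
    have hab : a x * b y = 0 := mul_eq_zero.2 (hxy.imp (· a ha) (· b hb))
    have hba : b x * a y = 0 := mul_eq_zero.2 (hyx.symm.imp (· b hb) (· a ha))
    simp [hab, hba]
  exact hle hω

/-- `P` is the projection of `Λ²V* = ⊕_{1 ≤ i ≤ j ≤ k} m i ∧ m j` onto its summand `m p ∧ m q`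
along the remaining ones. Since `wedgeSpan` lives in the space of all bilinear forms, the values of
`P` on forms that are not alternating are left free. -/
structure IsWedgeProjection (m : ℕ → Submodule ℝ (Dual ℝ V)) (k p q : ℕ)
    (P : (V →ₗ[ℝ] V →ₗ[ℝ] ℝ) →ₗ[ℝ] (V →ₗ[ℝ] V →ₗ[ℝ] ℝ)) : Prop where
  apply_eq_self : ∀ ω ∈ wedgeSpan (m p) (m q), P ω = ω
  apply_eq_zero : ∀ i j : ℕ, 1 ≤ i → i ≤ j → j ≤ k → ¬(i = p ∧ j = q) →
    ∀ ω ∈ wedgeSpan (m i) (m j), P ω = 0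

theorem IsDualDecomposition.mem_iSup_wedgeSpan [FiniteDimensional ℝ V] {C : ℕ → Submodule ℝ V}
    {k : ℕ} {m : ℕ → Submodule ℝ (Dual ℝ V)} (h : IsDualDecomposition C k m) (hk : 1 ≤ k)
    (hC0 : C 0 = ⊤) (hCk : C k = ⊥) {σ : V →ₗ[ℝ] V →ₗ[ℝ] ℝ} (hσ : σ.IsAlt)
    (hσC : ∀ a b, k ≤ a + b → ∀ x ∈ C a, ∀ y ∈ C b, σ x y = 0) :
    σ ∈ ⨆ i ∈ Finset.Icc 1 k, ⨆ j ∈ Finset.Icc 1 (k + 1 - i), wedgeSpan (m i) (m j) := by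
  obtain ⟨ι, _, d, e, hd⟩ := h.exists_adapted_basis hk hC0 hCk
  rw [← Submodule.smul_mem_iff _ (two_ne_zero' ℝ), two_smul_eq_sum_coord_of_isAlt hσ e]
  refine Submodule.sum_mem _ fun r _ ↦ Submodule.sum_mem _ fun s _ ↦ ?_
  obtain ⟨hdr, hr, hrC⟩ := hd r
  obtain ⟨hds, hs, hsC⟩ := hd s
  have hds1 := (Finset.mem_Icc.1 hds).1
  by_cases hrs : d s ≤ k + 1 - d r
  · exact Submodule.smul_mem _ _ <| Submodule.mem_iSup_of_mem (d r) <|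
      Submodule.mem_iSup_of_mem hdr <| Submodule.mem_iSup_of_mem (d s) <|
      Submodule.mem_iSup_of_mem (Finset.mem_Icc.2 ⟨hds1, hrs⟩) <|
      Submodule.subset_span ⟨_, hr, _, hs, rfl⟩
  · rw [hσC (d r - 1) (d s - 1) (by omega) _ hrC _ hsC, zero_smul]
    exact Submodule.zero_mem _

namespace IsWedgeProjection

variable {m : ℕ → Submodule ℝ (Dual ℝ V)} {k t : ℕ}
  {P : (V →ₗ[ℝ] V →ₗ[ℝ] ℝ) →ₗ[ℝ] (V →ₗ[ℝ] V →ₗ[ℝ] ℝ)}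

theorem apply_eq_self_or_apply_eq_zero {p q : ℕ} (hP : IsWedgeProjection m k p q P) {i j : ℕ}
    (hi : i ∈ Finset.Icc 1 k) (hj : j ∈ Finset.Icc 1 k) {ω : V →ₗ[ℝ] V →ₗ[ℝ] ℝ}
    (hω : ω ∈ wedgeSpan (m i) (m j)) :
    P ω = ω ∨ P ω = 0 ∧ ¬(i = p ∧ j = q) ∧ ¬(i = q ∧ j = p) := by
  rw [Finset.mem_Icc] at hi hj
  by_cases hpq : i = p ∧ j = q
  · obtain ⟨rfl, rfl⟩ := hpq
    exact .inl (hP.apply_eq_self ω hω)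
  by_cases hqp : i = q ∧ j = p
  · obtain ⟨rfl, rfl⟩ := hqp
    exact .inl (hP.apply_eq_self ω (wedgeSpan_comm (m i) (m j) ▸ hω))
  refine .inr ⟨?_, hpq, hqp⟩
  obtain hij | hji := le_total i j
  · exact hP.apply_eq_zero i j hi.1 hij hj.2 hpq ω hω
  · exact hP.apply_eq_zero j i hj.1 hji hi.2 (fun h ↦ hqp h.symm) ω
      (wedgeSpan_comm (m i) (m j) ▸ hω)

variable {C : ℕ → Submodule ℝ V} {x y : V}

/-- Among the `m i ∧ m j` with `i + j ≤ k + 1`, only `m t ∧ m (k - t + 1)` can be nonzero on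
`C (k - t) × C (t - 1)`. -/
theorem apply_apply_eq_of_mem_wedgeSpan (hP : IsWedgeProjection m k t (k - t + 1) P)
    (hm : IsDualDecomposition C k m) (hC : Antitone C) (ht : t ∈ Finset.Icc 1 k)
    (hx : x ∈ C (k - t)) (hy : y ∈ C (t - 1)) {i j : ℕ} (hi : i ∈ Finset.Icc 1 k)
    (hj : j ∈ Finset.Icc 1 (k + 1 - i)) {ω : V →ₗ[ℝ] V →ₗ[ℝ] ℝ}
    (hω : ω ∈ wedgeSpan (m i) (m j)) : P ω x y = ω x y := by
  have ⟨hi1, hik⟩ := Finset.mem_Icc.1 hi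
  have ⟨hj1, hij⟩ := Finset.mem_Icc.1 hj
  have ⟨ht1, htk⟩ := Finset.mem_Icc.1 ht
  have hjk : j ∈ Finset.Icc 1 k := Finset.mem_Icc.2 (by omega)
  obtain hself | ⟨hzero, hne, hne'⟩ := hP.apply_eq_self_or_apply_eq_zero hi hjk hω
  · rw [hself]
  have vanish {l n : ℕ} (hl : l ∈ Finset.Icc 1 k) (hln : l ≤ n) {z : V} (hz : z ∈ C n) :
      ∀ a ∈ m l, a z = 0 := fun _ ha ↦ hm.apply_eq_zero hl ha (hC hln hz)
  have hxy : i ≤ k - t ∨ j ≤ t - 1 := by omega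
  have hyx : i ≤ t - 1 ∨ j ≤ k - t := by omega
  rw [hzero, apply_eq_zero_of_mem_wedgeSpan (hxy.imp (vanish hi · hx) (vanish hjk · hy))
    (hyx.imp (vanish hi · hy) (vanish hjk · hx)) hω]
  rfl

theorem apply_apply_eq [FiniteDimensional ℝ V] (hP : IsWedgeProjection m k t (k - t + 1) P)
    (hm : IsDualDecomposition C k m) (hC : Antitone C) (hC0 : C 0 = ⊤) (hCk : C k = ⊥)
    (ht : t ∈ Finset.Icc 1 k) {σ : V →ₗ[ℝ] V →ₗ[ℝ] ℝ} (hσ : σ.IsAlt)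
    (hσC : ∀ a b, k ≤ a + b → ∀ x ∈ C a, ∀ y ∈ C b, σ x y = 0)
    (hx : x ∈ C (k - t)) (hy : y ∈ C (t - 1)) : P σ x y = σ x y := by
  let evalAt : (V →ₗ[ℝ] V →ₗ[ℝ] ℝ) →ₗ[ℝ] ℝ := LinearMap.applyₗ y ∘ₗ LinearMap.applyₗ x
  have hle : ⨆ i ∈ Finset.Icc 1 k, ⨆ j ∈ Finset.Icc 1 (k + 1 - i), wedgeSpan (m i) (m j) ≤
      LinearMap.eqLocus (evalAt ∘ₗ P) evalAt :=
    iSup₂_le fun i hi ↦ iSup₂_le fun j hj ω hω ↦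
      hP.apply_apply_eq_of_mem_wedgeSpan hm hC ht hx hy hi hj hω
  have hk : 1 ≤ k := (Finset.mem_Icc.1 ht).1.trans (Finset.mem_Icc.1 ht).2
  exact hle (hm.mem_iSup_wedgeSpan hk hC0 hCk hσ hσC)

end IsWedgeProjection

end WedgeSpan

section LowerCentralSeries

variable {R L M : Type*} [CommRing R] [LieRing L] [LieAlgebra R L] [AddCommGroup M] [Module R M]
  [LieRingModule L M]

theorem lie_mem_lowerCentralSeries_succ {n : ℕ} (x : L) {m : M}
    (hm : m ∈ lowerCentralSeries R L M n) : ⁅x, m⁆ ∈ lowerCentralSeries R L M (n + 1) := by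
  rw [lowerCentralSeries_succ]
  exact LieSubmodule.lie_mem_lie (LieSubmodule.mem_top x) hm

theorem two_le_of_lowerCentralSeries_eq_bot {k : ℕ} (hk : lowerCentralSeries R L M k = ⊥)
    (hne : ∃ (x : L) (m : M), ⁅x, m⁆ ≠ 0) : 2 ≤ k := by
  obtain ⟨x, m, hxm⟩ := hne
  by_contra! hk2
  have hmem : ⁅x, m⁆ ∈ lowerCentralSeries R L M 1 :=
    lie_mem_lowerCentralSeries_succ x (by simp)
  have hbot := antitone_lowerCentralSeries R L M (Nat.le_of_lt_succ hk2) hmem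
  exact hxm ((LieSubmodule.mem_bot _).1 (hk ▸ hbot))

variable [LieModule R L M]

theorem lowerCentralSeries_succ_le {n : ℕ} {S : Submodule R M}
    (hS : ∀ x : L, ∀ m ∈ lowerCentralSeries R L M n, ⁅x, m⁆ ∈ S) :
    (lowerCentralSeries R L M (n + 1)).toSubmodule ≤ S := by
  rw [lowerCentralSeries_succ, LieSubmodule.lieIdeal_oper_eq_linear_span', Submodule.span_le]
  rintro _ ⟨x, -, m, hm, rfl⟩
  exact hS x m hm

theorem lie_mem_lowerCentralSeries_add {a b : ℕ} {x : L} {m : M}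
    (hx : x ∈ lowerCentralSeries R L L a) (hm : m ∈ lowerCentralSeries R L M b) :
    ⁅x, m⁆ ∈ lowerCentralSeries R L M (a + b + 1) := by
  induction a generalizing b m x with
  | zero => simpa using lie_mem_lowerCentralSeries_succ x hm
  | succ a ih =>
    let S := (lowerCentralSeries R L M (a + 1 + b + 1)).toSubmodule.comap
      (LinearMap.flip (toEnd R L M : L →ₗ[R] End R M) m)
    refine lowerCentralSeries_succ_le (S := S) (fun u w hw ↦ ?_) hx
    change ⁅⁅u, w⁆, m⁆ ∈ lowerCentralSeries R L M (a + 1 + b + 1)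
    rw [lie_lie, show a + 1 + b + 1 = a + b + 1 + 1 by omega]
    exact sub_mem (lie_mem_lowerCentralSeries_succ u (ih hw hm))
      (ih hw (lie_mem_lowerCentralSeries_succ u hm))

end LowerCentralSeries

section TwoForms

variable {L M : Type*} [LieRing L] [LieAlgebra ℝ L] [LieRing M] [LieAlgebra ℝ M]

theorem IsClosed2Form.apply_eq_zero_of_mem_lowerCentralSeries {σ : L →ₗ[ℝ] L →ₗ[ℝ] ℝ}
    (hσ : IsClosed2Form σ) (halt : σ.IsAlt) {k : ℕ} (hk : lowerCentralSeries ℝ L L k = ⊥) {a b : ℕ}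
    (hab : k ≤ a + b) {x y : L} (hx : x ∈ lowerCentralSeries ℝ L L a)
    (hy : y ∈ lowerCentralSeries ℝ L L b) : σ x y = 0 := by
  have eq_zero {c : ℕ} (hc : k ≤ c) {z : L} (hz : z ∈ lowerCentralSeries ℝ L L c) : z = 0 :=
    (LieSubmodule.mem_bot z).1 (hk ▸ antitone_lowerCentralSeries ℝ L L hc hz)
  induction a generalizing b x y with
  | zero => rw [eq_zero (by omega) hy, map_zero]
  | succ a ih =>
    refine lowerCentralSeries_succ_le (S := LinearMap.ker (σ.flip y)) (fun u w hw ↦ ?_) hx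
    have hwy : ⁅w, y⁆ = 0 := eq_zero (by omega) (lie_mem_lowerCentralSeries_add hw hy)
    have hyu : ⁅y, u⁆ ∈ lowerCentralSeries ℝ L L (b + 1) := by
      rw [← lie_skew]
      exact neg_mem (lie_mem_lowerCentralSeries_succ u hy)
    have hyuw : σ ⁅y, u⁆ w = 0 := halt.eq_iff.1 (ih (by omega) hw hyu)
    simpa [hwy, hyuw] using hσ u w y

theorem not_isExact2Form_of_disjoint_ker {σ : L →ₗ[ℝ] L →ₗ[ℝ] ℝ} {n : ℕ}
    (hn : lowerCentralSeries ℝ L L n ≠ ⊥) (hn' : lowerCentralSeries ℝ L L (n + 1) = ⊥)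
    (hσ : Disjoint (lowerCentralSeries ℝ L L n).toSubmodule (LinearMap.ker σ)) :
    ¬IsExact2Form σ := by
  rintro ⟨f, hf⟩
  refine hn ((LieSubmodule.eq_bot_iff _).2 fun z hz ↦
    Submodule.disjoint_def.1 hσ z hz (LinearMap.ext fun y ↦ ?_))
  have hyz : ⁅y, z⁆ = 0 :=
    (LieSubmodule.mem_bot _).1 (hn' ▸ lie_mem_lowerCentralSeries_succ y hz)
  rw [hf, ← lie_skew, hyz]
  simp

theorem IsClosed2Form.compl₁₂ {ω : M →ₗ[ℝ] M →ₗ[ℝ] ℝ} (hω : IsClosed2Form ω) (ι : L →ₗ⁅ℝ⁆ M) :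
    IsClosed2Form (ω.compl₁₂ (ι : L →ₗ[ℝ] M) (ι : L →ₗ[ℝ] M)) := fun x y z ↦ by
  simpa using hω (ι x) (ι y) (ι z)

/-- Closedness makes the centralizer of `ι L` orthogonal to `[ι L, ι L]`, so an element of
`[ι L, ι L]` orthogonal to `ι L` is orthogonal to all of `M`. -/
theorem IsSymplectic.disjoint_ker_compl₁₂ {ω : M →ₗ[ℝ] M →ₗ[ℝ] ℝ} (hω : IsSymplectic ω)
    {ι : L →ₗ⁅ℝ⁆ M} (hι : Function.Injective ι)
    (hcent : ∀ z : M, ∃ x : L, ∀ y : L, ⁅z - ι x, ι y⁆ = 0) :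
    Disjoint (lowerCentralSeries ℝ L L 1).toSubmodule
      (LinearMap.ker (ω.compl₁₂ (ι : L →ₗ[ℝ] M) (ι : L →ₗ[ℝ] M))) := by
  obtain ⟨-, hnondeg, hclosed⟩ := hω
  have horth {c : M} (hc : ∀ y, ⁅c, ι y⁆ = 0) :
      (lowerCentralSeries ℝ L L 1).toSubmodule ≤ LinearMap.ker (ω.flip c ∘ₗ (ι : L →ₗ[ℝ] M)) := by
    refine lowerCentralSeries_succ_le fun u w _ ↦ ?_
    have hwc : ⁅ι w, c⁆ = 0 := by rw [← lie_skew, hc, neg_zero]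
    simpa [hwc, hc] using hclosed (ι u) (ι w) c
  refine Submodule.disjoint_def.2 fun x hx hker ↦ hι ?_
  rw [map_zero]
  refine hnondeg _ fun z ↦ ?_
  obtain ⟨x', hx'⟩ := hcent z
  have h₁ : ω (ι x) (ι x') = 0 := LinearMap.congr_fun hker x'
  have h₂ : ω (ι x) (z - ι x') = 0 := horth hx' hx
  rw [← sub_add_cancel z (ι x'), map_add, h₁, h₂, add_zero]

theorem exists_isClosed2Form_disjoint_ker_of_symplectic
    (hω : (∃ ω : L →ₗ[ℝ] L →ₗ[ℝ] ℝ, IsSymplectic ω) ∨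
      ∃ ω : (ℝ × L) →ₗ[ℝ] (ℝ × L) →ₗ[ℝ] ℝ, IsSymplectic ω) :
    ∃ σ : L →ₗ[ℝ] L →ₗ[ℝ] ℝ, σ.IsAlt ∧ IsClosed2Form σ ∧
      Disjoint (lowerCentralSeries ℝ L L 1).toSubmodule (LinearMap.ker σ) := by
  obtain ⟨ω, hω⟩ | ⟨ω, hω⟩ := hω
  · have hker : LinearMap.ker ω = ⊥ :=
      LinearMap.ker_eq_bot'.2 fun x hx ↦ hω.2.1 x (LinearMap.congr_fun hx)
    exact ⟨ω, hω.1, hω.2.2, hker ▸ disjoint_bot_right⟩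
  · let inr : L →ₗ⁅ℝ⁆ ℝ × L := { LinearMap.inr ℝ ℝ L with map_lie' := rfl }
    have hcent (z : ℝ × L) : ∃ x : L, ∀ y : L, ⁅z - inr x, inr y⁆ = 0 :=
      ⟨z.2, fun y ↦ Prod.ext rfl (by
        change ⁅z.2 - z.2, y⁆ = 0
        rw [sub_self, zero_lie])⟩
    exact ⟨_, fun x ↦ hω.1 (inr x), hω.2.2.compl₁₂ inr,
      hω.disjoint_ker_compl₁₂ LinearMap.inr_injective hcent⟩

end TwoForms

theorem exists_closed_not_exact_of_symplectic_general
    {L : Type*} [LieRing L] [LieAlgebra ℝ L] [Module.Finite ℝ L]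
    (hnonab : ∃ x y : L, ⁅x, y⁆ ≠ 0) {k : ℕ} (hk : lowerCentralSeries ℝ L L k = ⊥)
    (hk' : lowerCentralSeries ℝ L L (k - 1) ≠ ⊥)
    (hσ : ∃ σ : L →ₗ[ℝ] L →ₗ[ℝ] ℝ, σ.IsAlt ∧ IsClosed2Form σ ∧
      Disjoint (lowerCentralSeries ℝ L L 1).toSubmodule (LinearMap.ker σ))
    {m : ℕ → Submodule ℝ (Dual ℝ L)}
    (hm : IsDualDecomposition (fun j ↦ (lowerCentralSeries ℝ L L j).toSubmodule) k m)
    {t : ℕ} (ht1 : 1 ≤ t) (ht2 : t ≤ (k + 1) / 2)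
    (hdim : finrank ℝ L < finrank ℝ (lowerCentralSeries ℝ L L (k - t)).toSubmodule +
      finrank ℝ (lowerCentralSeries ℝ L L (t - 1)).toSubmodule)
    {P : (L →ₗ[ℝ] L →ₗ[ℝ] ℝ) →ₗ[ℝ] (L →ₗ[ℝ] L →ₗ[ℝ] ℝ)}
    (hP : IsWedgeProjection m k t (k - t + 1) P) :
    ∃ σ : L →ₗ[ℝ] L →ₗ[ℝ] ℝ, (∀ x : L, σ x x = 0) ∧ IsClosed2Form σ ∧
      ¬IsExact2Form σ ∧ P σ ≠ 0 := by
  obtain ⟨σ, halt, hclosed, hdisj₁⟩ := hσ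
  have hk2 : 2 ≤ k := two_le_of_lowerCentralSeries_eq_bot hk hnonab
  have hdisj {n : ℕ} (hn : 1 ≤ n) :
      Disjoint (lowerCentralSeries ℝ L L n).toSubmodule (LinearMap.ker σ) :=
    hdisj₁.mono_left (antitone_lowerCentralSeries ℝ L L hn)
  refine ⟨σ, halt, hclosed, ?_, fun hPσ ↦ ?_⟩
  · exact not_isExact2Form_of_disjoint_ker hk' (by rwa [Nat.sub_add_cancel (by omega)])
      (hdisj (by omega))
  · obtain ⟨x, hx, y, hy, hxy⟩ := exists_apply_ne_zero_of_finrank_lt (hdisj (by omega)) hdim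
    have hPxy : P σ x y = σ x y := hP.apply_apply_eq hm (antitone_lowerCentralSeries ℝ L L)
      (by simp) (by simp [hk]) (Finset.mem_Icc.2 (by omega)) halt
      (fun _ _ hab _ hx _ hy ↦ hclosed.apply_eq_zero_of_mem_lowerCentralSeries halt hk hab hx hy)
      hx hy
    exact hxy (by rw [← hPxy, hPσ]; rfl)

/-- Let `𝔫` be a nonabelian `k`-step nilpotent finite-dimensional real Lie algebra such that
`𝔫` or `ℝ⊕𝔫` is symplectic, and let `m₁,…,m_k` realize the dual decomposition associated with
the lower central series, with `P_t` the projection of `Λ²𝔫*` onto `m_t ∧ m_{k−t+1}`.  If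
`dim C^{k−t}(𝔫) + dim C^{t−1}(𝔫) > dim 𝔫` for some `1 ≤ t ≤ ⌈k/2⌉`, then there is a closed
2-form `σ` which is not exact and has `P_t σ ≠ 0`. -/
theorem exists_closed_not_exact_of_symplectic
    (L : Type*) [LieRing L] [LieAlgebra ℝ L] [Module.Finite ℝ L]
    (hnonab : ∃ x y : L, ⁅x, y⁆ ≠ 0)
    (k : ℕ) (hk1 : 1 ≤ k)
    (hstep : LieModule.lowerCentralSeries ℝ L L k = ⊥)
    (hstep' : LieModule.lowerCentralSeries ℝ L L (k - 1) ≠ ⊥)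
    (hsymp : (∃ ω : L →ₗ[ℝ] L →ₗ[ℝ] ℝ, IsSymplectic ω) ∨
      (∃ ω : (ℝ × L) →ₗ[ℝ] (ℝ × L) →ₗ[ℝ] ℝ, IsSymplectic ω))
    (m : ℕ → Submodule ℝ (Module.Dual ℝ L))
    (hindep : iSupIndep fun i : Finset.Icc 1 k => m i)
    (hm : ∀ j ∈ Finset.Icc 1 k,
      (⨆ i ∈ Finset.Icc 1 j, m i) =
        ((LieModule.lowerCentralSeries ℝ L L j : LieSubmodule ℝ L L) :
          Submodule ℝ L).dualAnnihilator)
    (t : ℕ) (ht1 : 1 ≤ t) (ht2 : t ≤ (k + 1) / 2)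
    (hdim : Module.finrank ℝ L <
      Module.finrank ℝ ((LieModule.lowerCentralSeries ℝ L L (k - t) : LieSubmodule ℝ L L) :
          Submodule ℝ L) +
      Module.finrank ℝ ((LieModule.lowerCentralSeries ℝ L L (t - 1) : LieSubmodule ℝ L L) :
          Submodule ℝ L))
    -- `P` is the projection onto `m_t ∧ m_{k−t+1}` along the remaining summands of
    -- `Λ²𝔫* = ⊕_{1≤i≤j≤k} m_i ∧ m_j`:
    (P : (L →ₗ[ℝ] L →ₗ[ℝ] ℝ) →ₗ[ℝ] (L →ₗ[ℝ] L →ₗ[ℝ] ℝ))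
    (hP1 : ∀ ω ∈ wedgeSpan (m t) (m (k - t + 1)), P ω = ω)
    (hP2 : ∀ i j : ℕ, 1 ≤ i → i ≤ j → j ≤ k → ¬(i = t ∧ j = k - t + 1) →
      ∀ ω ∈ wedgeSpan (m i) (m j), P ω = 0) :
    ∃ σ : L →ₗ[ℝ] L →ₗ[ℝ] ℝ, (∀ x : L, σ x x = 0) ∧ IsClosed2Form σ ∧
      ¬IsExact2Form σ ∧ P σ ≠ 0 := by
  exact exists_closed_not_exact_of_symplectic_general hnonab hstep hstep'
    (exists_isClosed2Form_disjoint_ker_of_symplectic hsymp) ⟨hindep, hm⟩ ht1 ht2 hdim ⟨hP1, hP2⟩
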